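/- Let F and F̂ be nonempty compact subsets of ℝ^d and suppose F̂ is a fast pseudo-tangent of F, i.e. there are bi-Lipschitz maps T_k : ℝ^d → ℝ^d with constants 0 < a_k ≤ b_k (a_k‖x−y‖ ≤ ‖T_k(x) − T_k(y)‖ ≤ b_k‖x−y‖ for all x, y) satisfying sup_k b_k/a_k < ∞ and sup_k b_k = ∞, and constants C, ε > 0, such that the one-sided distance p_H(F̂, T_k(F)) ≤ C b_k^{−ε} for all k. Then the lower box dimension of F̂ is at most the quasi-Assouad dimension of F: \underline{dim}_B F̂ ≤ dim_qA F. -/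

import Mathlib

open Metric Filter Set
open scoped ENNReal

/-- `N_r(A)`: the least number of closed balls of radius `r` needed to cover `A`. -/
noncomputable def coverNum {X : Type*} [PseudoMetricSpace X] (A : Set X) (r : ℝ) : ℕ :=
  sInf {n : ℕ | ∃ S : Finset X, S.card = n ∧ A ⊆ ⋃ x ∈ S, closedBall x r}

/-- `N_{r,R}(E) = sup_{x ∈ E} N_r(E ∩ B(x,R))`. -/
noncomputable def coverNumLoc {X : Type*} [PseudoMetricSpace X] (E : Set X) (r R : ℝ) : ℕ :=
  sSup {n : ℕ | ∃ x ∈ E, n = coverNum (E ∩ closedBall x R) r}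

/-- Upper box dimension `limsup_{r → 0⁺} log N_r(E) / log (1/r)`. -/
noncomputable def upperBoxDim {X : Type*} [PseudoMetricSpace X] (E : Set X) : ℝ :=
  limsup (fun r : ℝ => Real.log (coverNum E r) / Real.log (1 / r)) (nhdsWithin 0 (Ioi 0))

/-- Lower box dimension `liminf_{r → 0⁺} log N_r(E) / log (1/r)`. -/
noncomputable def lowerBoxDim {X : Type*} [PseudoMetricSpace X] (E : Set X) : ℝ :=
  liminf (fun r : ℝ => Real.log (coverNum E r) / Real.log (1 / r)) (nhdsWithin 0 (Ioi 0))

/-- `h̄_E(δ)`: the infimum of all `α ≥ 0` such that for some `b, c > 0`,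
`N_{r,R}(E) ≤ c (R/r)^α` whenever `0 < r ≤ R^{1+δ} ≤ R ≤ b`. -/
noncomputable def hUpper {X : Type*} [PseudoMetricSpace X] (E : Set X) (δ : ℝ) : ℝ :=
  sInf {α : ℝ | 0 ≤ α ∧ ∃ b c : ℝ, 0 < b ∧ 0 < c ∧ ∀ r R : ℝ,
    0 < r → r ≤ R ^ (1 + δ) → R ^ (1 + δ) ≤ R → R ≤ b →
    (coverNumLoc E r R : ℝ) ≤ c * (R / r) ^ α}

/-- `h̲_E(δ)`: the supremum of all `α ≥ 0` such that for some `b, c > 0`,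
`N_{r,R}(E) ≥ c (R/r)^α` whenever `0 < r ≤ R^{1+δ} ≤ R ≤ b`. -/
noncomputable def hLower {X : Type*} [PseudoMetricSpace X] (E : Set X) (δ : ℝ) : ℝ :=
  sSup {α : ℝ | 0 ≤ α ∧ ∃ b c : ℝ, 0 < b ∧ 0 < c ∧ ∀ r R : ℝ,
    0 < r → r ≤ R ^ (1 + δ) → R ^ (1 + δ) ≤ R → R ≤ b →
    c * (R / r) ^ α ≤ (coverNumLoc E r R : ℝ)}

/-- The quasi-Assouad dimension `dim_qA E = lim_{δ → 0⁺} h̄_E(δ)`; since `h̄_E` is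
nonincreasing this limit equals the supremum over `δ ∈ (0,1)`. -/
noncomputable def qADim {X : Type*} [PseudoMetricSpace X] (E : Set X) : ℝ :=
  sSup (hUpper E '' Ioo (0:ℝ) 1)

/-- The quasi-lower Assouad dimension `dim_qL E = lim_{δ → 0⁺} h̲_E(δ)`; since `h̲_E` is
nondecreasing this limit equals the infimum over `δ ∈ (0,1)`. -/
noncomputable def qLDim {X : Type*} [PseudoMetricSpace X] (E : Set X) : ℝ :=
  sInf (hLower E '' Ioo (0:ℝ) 1)

/-- Assouad dimension `dim_A E = h̄_E(0)`. -/
noncomputable def assouadDim {X : Type*} [PseudoMetricSpace X] (E : Set X) : ℝ := hUpper E 0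

/-- Lower (Assouad) dimension `dim_L E = h̲_E(0)`. -/
noncomputable def lowerAssouadDim {X : Type*} [PseudoMetricSpace X] (E : Set X) : ℝ := hLower E 0

/-- One-sided pseudo-distance `p_H(A, B) = sup_{x ∈ A} inf_{y ∈ B} ‖x − y‖`. -/
noncomputable def pH {X : Type*} [PseudoMetricSpace X] (A B : Set X) : ℝ :=
  sSup ((fun x => infDist x B) '' A)

/-! Fix an exponent `α` with `N_{r,R}(F) ≤ c (R/r)^α` for `r ≤ R^{1+δ}`, where `δ < ε`. At scale
`ρ = C b_k^{-ε}` the set `Fhat` looks like the image under `T_k` of a piece of `F` of diameter about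
`1 / b_k`, so it is covered by `N_{r,R}(F)` balls of radius `3ρ`, with `R = D / b_k` for a constant
`D` and `r = ρ / b_k`. Speed of convergence enters only here: since `δ < ε`, these scales satisfy
`r ≤ R^{1+δ}` once `b_k` is large. As `R / r = D / ρ`, the bound reads `N_{3ρ}(Fhat) ≲ (3ρ)^{-α}`,
and letting `b_k → ∞` gives `lowerBoxDim Fhat ≤ α`. -/

open Bornology MeasureTheory Module Topology
open scoped NNReal

section CoveringNumbers

variable {X : Type*} [PseudoMetricSpace X] {A F : Set X} {r R : ℝ} {x : X}

lemma coverNum_le_card (S : Finset X) (hS : A ⊆ ⋃ x ∈ S, closedBall x r) :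
    coverNum A r ≤ S.card :=
  Nat.sInf_le ⟨S, rfl, hS⟩

lemma exists_finset_card_eq_coverNum (h : ∃ S : Finset X, A ⊆ ⋃ x ∈ S, closedBall x r) :
    ∃ S : Finset X, S.card = coverNum A r ∧ A ⊆ ⋃ x ∈ S, closedBall x r :=
  Nat.sInf_mem (s := {n | ∃ S : Finset X, S.card = n ∧ A ⊆ ⋃ x ∈ S, closedBall x r})
    (h.elim fun S hS ↦ ⟨S.card, S, rfl, hS⟩)

/-- `F` has finite Assouad dimension: its pieces of radius `R` are covered by at most `K (R/r)^s`
balls of radius `r`, at all scales `r ≤ R`. This is phrased through covers because `coverNum`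
takes the junk value `0` on sets without finite covers. -/
def HasFiniteAssouadDim (F : Set X) : Prop :=
  ∃ K s : ℝ, 0 < K ∧ 0 ≤ s ∧ ∀ x ∈ F, ∀ r R : ℝ, 0 < r → r ≤ R →
    ∃ S : Finset X, (S.card : ℝ) ≤ K * (R / r) ^ s ∧ F ∩ closedBall x R ⊆ ⋃ z ∈ S, closedBall z r

namespace HasFiniteAssouadDim

lemma exists_finset_card_eq_coverNum_inter (hF : HasFiniteAssouadDim F) (hr : 0 < r) (hrR : r ≤ R)
    (hx : x ∈ F) : ∃ S : Finset X, S.card = coverNum (F ∩ closedBall x R) r ∧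
      F ∩ closedBall x R ⊆ ⋃ z ∈ S, closedBall z r := by
  obtain ⟨K, s, -, -, hcover⟩ := hF
  obtain ⟨S, -, hS⟩ := hcover x hx r R hr hrR
  exact exists_finset_card_eq_coverNum ⟨S, hS⟩

lemma exists_coverNum_le (hF : HasFiniteAssouadDim F) : ∃ K s : ℝ, 0 < K ∧ 0 ≤ s ∧
    ∀ x ∈ F, ∀ r R : ℝ, 0 < r → r ≤ R →
      (coverNum (F ∩ closedBall x R) r : ℝ) ≤ K * (R / r) ^ s := by
  obtain ⟨K, s, hK, hs, hcover⟩ := hF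
  refine ⟨K, s, hK, hs, fun x hx r R hr hrR ↦ ?_⟩
  obtain ⟨S, hcard, hS⟩ := hcover x hx r R hr hrR
  exact (Nat.cast_le.2 (coverNum_le_card S hS)).trans hcard

lemma coverNum_le_coverNumLoc (hF : HasFiniteAssouadDim F) (hr : 0 < r) (hrR : r ≤ R)
    (hx : x ∈ F) : coverNum (F ∩ closedBall x R) r ≤ coverNumLoc F r R := by
  obtain ⟨K, s, -, -, hle⟩ := hF.exists_coverNum_le
  refine le_csSup ⟨⌊K * (R / r) ^ s⌋₊, ?_⟩ ⟨x, hx, rfl⟩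
  rintro _ ⟨y, hy, rfl⟩
  exact Nat.le_floor (hle y hy r R hr hrR)

lemma exists_coverNumLoc_le (hF : HasFiniteAssouadDim F) : ∃ K s : ℝ, 0 < K ∧ 0 ≤ s ∧
    ∀ r R : ℝ, 0 < r → r ≤ R → (coverNumLoc F r R : ℝ) ≤ K * (R / r) ^ s := by
  obtain ⟨K, s, hK, hs, hle⟩ := hF.exists_coverNum_le
  refine ⟨K, s, hK, hs, fun r R hr hrR ↦ ?_⟩
  have hR : 0 < R := hr.trans_le hrR
  have hfloor : coverNumLoc F r R ≤ ⌊K * (R / r) ^ s⌋₊ := csSup_le' <| by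
    rintro _ ⟨y, hy, rfl⟩
    exact Nat.le_floor (hle y hy r R hr hrR)
  exact (Nat.le_floor_iff (by positivity)).1 hfloor

end HasFiniteAssouadDim

end CoveringNumbers

section FiniteDimensional

lemma packingNumber_ne_top_of_totallyBounded {X : Type*} [PseudoEMetricSpace X] {A : Set X}
    (hA : TotallyBounded A) {r : ℝ≥0} (hr : r ≠ 0) : packingNumber r A ≠ ⊤ := by
  obtain ⟨N, -, hN, hcover⟩ :=
    exists_finite_isCover_of_totallyBounded (div_ne_zero hr two_ne_zero) hA
  have hle : packingNumber (2 * (r / 2)) A ≤ N.encard :=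
    (packingNumber_two_mul_le_externalCoveringNumber _ A).trans
      hcover.externalCoveringNumber_le_encard
  rw [mul_div_cancel₀ r two_ne_zero] at hle
  exact (hle.trans_lt hN.encard_lt_top).ne

variable {E : Type*} [NormedAddCommGroup E] [NormedSpace ℝ E] [FiniteDimensional ℝ E]

-- The balls of radius `r / 2` about the points of `s` are disjoint and lie in `B(x, 2R)`.
lemma card_le_of_isSeparated_closedBall (s : Finset E) {x : E} {r : ℝ≥0} {R : ℝ} (hr : 0 < r)
    (hrR : r ≤ R) (hs : (s : Set E) ⊆ closedBall x R) (hsep : IsSeparated r (s : Set E)) :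
    (s.card : ℝ) ≤ (4 * (R / r)) ^ finrank ℝ E := by
  borelize E
  let μ : Measure E := Measure.addHaar
  have hr₀ : (0 : ℝ) < r := hr
  have hR : 0 < R := hr₀.trans_le hrR
  have hdisj : (s : Set E).PairwiseDisjoint fun z ↦ closedBall z (r / 2 : ℝ) := by
    intro y hy z hz hyz
    refine closedBall_disjoint_closedBall ?_
    have hlt : r < nndist y z := by
      simpa only [edist_nndist, ENNReal.coe_lt_coe] using hsep hy hz hyz
    rw [← NNReal.coe_lt_coe, coe_nndist] at hlt
    linarith
  have hsub : ⋃ z ∈ s, closedBall z (r / 2 : ℝ) ⊆ closedBall x (2 * R) :=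
    iUnion₂_subset fun z hz ↦ closedBall_subset_closedBall' <| by
      have hzR : dist z x ≤ R := hs hz
      linarith
  have hfinite : ∀ (z : E) (ρ : ℝ), μ (closedBall z ρ) ≠ ∞ := fun z ρ ↦ measure_closedBall_lt_top.ne
  have hμ : 0 < μ.real (closedBall 0 1) :=
    ENNReal.toReal_pos (measure_closedBall_pos μ 0 one_pos).ne' (hfinite 0 1)
  have hvol : s.card * (r / 2 : ℝ) ^ finrank ℝ E * μ.real (closedBall 0 1) ≤
      (2 * R) ^ finrank ℝ E * μ.real (closedBall 0 1) :=
    calc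
      _ = ∑ z ∈ s, μ.real (closedBall z (r / 2 : ℝ)) := by
        simp only [μ.addHaar_real_closedBall' _ (half_pos hr₀).le, Finset.sum_const, nsmul_eq_mul,
          mul_assoc]
      _ = μ.real (⋃ z ∈ s, closedBall z (r / 2 : ℝ)) :=
        (measureReal_biUnion_finset hdisj (fun z _ ↦ measurableSet_closedBall)
          fun z _ ↦ hfinite z _).symm
      _ ≤ μ.real (closedBall x (2 * R)) := measureReal_mono hsub (hfinite x _)
      _ = _ := μ.addHaar_real_closedBall' x (by positivity)
  calc
    (s.card : ℝ) ≤ (2 * R) ^ finrank ℝ E / (r / 2 : ℝ) ^ finrank ℝ E :=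
      (le_div_iff₀ (by positivity)).2 (le_of_mul_le_mul_right hvol hμ)
    _ = (4 * (R / r)) ^ finrank ℝ E := by
      rw [← div_pow]
      congr 1
      field_simp
      norm_num

lemma exists_finset_closedBall_subset_of_finiteDimensional (x : E) {r R : ℝ} (hr : 0 < r)
    (hrR : r ≤ R) : ∃ S : Finset E, (S.card : ℝ) ≤ (4 * (R / r)) ^ finrank ℝ E ∧
      closedBall x R ⊆ ⋃ z ∈ S, closedBall z r := by
  lift r to ℝ≥0 using hr.le
  rw [NNReal.coe_pos] at hr
  have : ProperSpace E := FiniteDimensional.proper_real E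
  have hpack : packingNumber r (closedBall x R) ≠ ⊤ :=
    packingNumber_ne_top_of_totallyBounded (isCompact_closedBall x R).totallyBounded hr.ne'
  obtain ⟨S, hS⟩ : ∃ S : Finset E, (S : Set E) = maximalSeparatedSet r (closedBall x R) :=
    Set.Finite.exists_finset_coe <| encard_ne_top_iff.1 <| by
      rwa [encard_maximalSeparatedSet hpack]
  refine ⟨S, card_le_of_isSeparated_closedBall S (x := x) hr hrR ?_ ?_, ?_⟩
  · exact hS ▸ maximalSeparatedSet_subset
  · exact hS ▸ isSeparated_maximalSeparatedSet
  · simpa only [← hS, Finset.mem_coe] using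
      (isCover_maximalSeparatedSet hpack).subset_iUnion_closedBall

theorem hasFiniteAssouadDim_of_finiteDimensional (F : Set E) : HasFiniteAssouadDim F := by
  refine ⟨4 ^ finrank ℝ E, finrank ℝ E, by positivity, by positivity, fun x _ r R hr hrR ↦ ?_⟩
  obtain ⟨S, hcard, hS⟩ := exists_finset_closedBall_subset_of_finiteDimensional x hr hrR
  refine ⟨S, ?_, inter_subset_right.trans hS⟩
  rwa [Real.rpow_natCast, ← mul_pow]

end FiniteDimensional

section QuasiAssouad

variable {X : Type*} [PseudoMetricSpace X] {F : Set X} {δ : ℝ}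

/-- `α` is one of the exponents over which `hUpper F δ` is the infimum. -/
def IsCoveringExponent (F : Set X) (δ α : ℝ) : Prop :=
  0 ≤ α ∧ ∃ b c : ℝ, 0 < b ∧ 0 < c ∧ ∀ r R : ℝ,
    0 < r → r ≤ R ^ (1 + δ) → R ^ (1 + δ) ≤ R → R ≤ b →
    (coverNumLoc F r R : ℝ) ≤ c * (R / r) ^ α

lemma HasFiniteAssouadDim.exists_forall_isCoveringExponent (hF : HasFiniteAssouadDim F) :
    ∃ s : ℝ, ∀ δ, IsCoveringExponent F δ s := by
  obtain ⟨K, s, hK, hs, hle⟩ := hF.exists_coverNumLoc_le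
  exact ⟨s, fun δ ↦ ⟨hs, 1, K, one_pos, hK, fun r R hr h₁ h₂ _ ↦ hle r R hr (h₁.trans h₂)⟩⟩

lemma hUpper_le {α : ℝ} (hα : IsCoveringExponent F δ α) : hUpper F δ ≤ α :=
  csInf_le ⟨0, fun _ h ↦ h.1⟩ hα

lemma le_hUpper (hF : HasFiniteAssouadDim F) {x : ℝ}
    (h : ∀ α, IsCoveringExponent F δ α → x ≤ α) : x ≤ hUpper F δ :=
  le_csInf (hF.exists_forall_isCoveringExponent.imp fun _ hs ↦ hs δ) h

lemma hUpper_le_qADim (hF : HasFiniteAssouadDim F) (hδ : δ ∈ Ioo (0 : ℝ) 1) :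
    hUpper F δ ≤ qADim F := by
  obtain ⟨s, hs⟩ := hF.exists_forall_isCoveringExponent
  refine le_csSup ⟨s, ?_⟩ (mem_image_of_mem _ hδ)
  rintro _ ⟨δ', -, rfl⟩
  exact hUpper_le (hs δ')

end QuasiAssouad

section LowerBox

variable {X : Type*} [PseudoMetricSpace X]

lemma isBoundedUnder_ge_log_coverNum_div_log (A : Set X) :
    IsBoundedUnder (· ≥ ·) (𝓝[>] 0)
      fun r : ℝ ↦ Real.log (coverNum A r) / Real.log (1 / r) := by
  refine isBoundedUnder_of_eventually_ge (a := 0) ?_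
  filter_upwards [Ioo_mem_nhdsGT (zero_lt_one' ℝ)] with r hr
  exact div_nonneg (Real.log_natCast_nonneg _) (Real.log_nonneg (one_le_one_div hr.1 hr.2.le))

lemma lowerBoxDim_le_of_frequently_coverNum_le {A : Set X} {α K : ℝ} (hα : 0 ≤ α) (hK : 0 < K)
    (h : ∃ᶠ r in 𝓝[>] (0 : ℝ), (coverNum A r : ℝ) ≤ K * (1 / r) ^ α) : lowerBoxDim A ≤ α := by
  refine le_of_forall_pos_le_add fun η hη ↦ ?_
  have hlog : Tendsto (fun r : ℝ ↦ η * Real.log (1 / r)) (𝓝[>] 0) atTop := by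
    simpa only [one_div, Function.comp_def] using
      (Real.tendsto_log_atTop.comp tendsto_inv_nhdsGT_zero).const_mul_atTop hη
  have hsmall := (hlog.eventually_ge_atTop (Real.log K)).and (Ioo_mem_nhdsGT (zero_lt_one' ℝ))
  refine liminf_le_of_frequently_le ((h.and_eventually hsmall).mono ?_)
    (isBoundedUnder_ge_log_coverNum_div_log A)
  rintro r ⟨hN, hlogK, hr₀, hr₁⟩
  have hlog_pos : 0 < Real.log (1 / r) := Real.log_pos ((one_lt_div hr₀).2 hr₁)
  rw [div_le_iff₀ hlog_pos]
  rcases Nat.eq_zero_or_pos (coverNum A r) with hzero | hpos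
  · rw [hzero, Nat.cast_zero, Real.log_zero]
    positivity
  · calc
      Real.log (coverNum A r) ≤ Real.log (K * (1 / r) ^ α) :=
        Real.log_le_log (Nat.cast_pos.2 hpos) hN
      _ = Real.log K + α * Real.log (1 / r) := by
        rw [Real.log_mul hK.ne' (by positivity), Real.log_rpow (by positivity)]
      _ ≤ (α + η) * Real.log (1 / r) := by linarith

end LowerBox

section PseudoTangent

variable {X Y : Type*} [PseudoMetricSpace X] [PseudoMetricSpace Y] {F : Set X} {Fhat : Set Y}

lemma exists_dist_lt_of_pH_lt {A B : Set Y} (hA : IsBounded A) (hB : B.Nonempty) {σ : ℝ}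
    (h : pH A B < σ) {x : Y} (hx : x ∈ A) : ∃ y ∈ B, dist x y < σ := by
  have hbdd : BddAbove ((fun x ↦ infDist x B) '' A) :=
    ((lipschitz_infDist_pt B).isBounded_image hA).bddAbove
  exact (infDist_lt_iff hB).1 ((le_csSup hbdd (mem_image_of_mem _ hx)).trans_lt h)

lemma coverNum_le_card_of_approx {A : Set Y} {T : X → Y} {b r σ : ℝ} (hb : 0 ≤ b)
    (hT : ∀ x y, dist (T x) (T y) ≤ b * dist x y) (S : Finset X)
    (happrox : ∀ x ∈ A, ∃ y ∈ ⋃ z ∈ S, closedBall z r, dist x (T y) ≤ σ) :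
    coverNum A (σ + b * r) ≤ S.card := by
  classical
  refine (coverNum_le_card (S.image T) fun x hx ↦ ?_).trans Finset.card_image_le
  obtain ⟨y, hy, hxy⟩ := happrox x hx
  obtain ⟨z, hz, hyz⟩ := mem_iUnion₂.1 hy
  refine mem_iUnion₂.2 ⟨T z, Finset.mem_image_of_mem T hz, ?_⟩
  calc
    dist x (T z) ≤ dist x (T y) + dist (T y) (T z) := dist_triangle ..
    _ ≤ σ + b * r := add_le_add hxy ((hT y z).trans (mul_le_mul_of_nonneg_left hyz hb))

lemma coverNum_le_coverNumLoc_of_pH_le (hF : HasFiniteAssouadDim F) (hFne : F.Nonempty)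
    (hFhat : IsBounded Fhat) (hFhatne : Fhat.Nonempty) {T : X → Y} {a b ρ R : ℝ} (ha : 0 < a)
    (hb : 0 < b) (hρ : 0 < ρ) (hlower : ∀ x y, a * dist x y ≤ dist (T x) (T y))
    (hupper : ∀ x y, dist (T x) (T y) ≤ b * dist x y) (hpH : pH Fhat (T '' F) ≤ ρ)
    (hR : diam Fhat + 4 * ρ ≤ a * R) (hrR : ρ / b ≤ R) :
    coverNum Fhat (3 * ρ) ≤ coverNumLoc F (ρ / b) R := by
  have happrox : ∀ x ∈ Fhat, ∃ y ∈ F, dist x (T y) < 2 * ρ := fun x hx ↦ by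
    simpa only [exists_mem_image] using
      exists_dist_lt_of_pH_lt hFhat (hFne.image T) (hpH.trans_lt (by linarith)) hx
  obtain ⟨x₀, hx₀⟩ := hFhatne
  obtain ⟨y₀, hy₀, hxy₀⟩ := happrox x₀ hx₀
  have hlocal : ∀ x ∈ Fhat, ∃ y ∈ F ∩ closedBall y₀ R, dist x (T y) ≤ 2 * ρ := by
    intro x hx
    obtain ⟨y, hy, hxy⟩ := happrox x hx
    refine ⟨y, ⟨hy, le_of_mul_le_mul_left ?_ ha⟩, hxy.le⟩
    calc
      a * dist y y₀ ≤ dist (T y) (T y₀) := hlower y y₀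
      _ ≤ dist (T y) x + dist x x₀ + dist x₀ (T y₀) := dist_triangle4 ..
      _ ≤ 2 * ρ + diam Fhat + 2 * ρ := by
        rw [dist_comm (T y)]
        gcongr
        exact dist_le_diam_of_mem hFhat hx hx₀
      _ ≤ a * R := by linarith
  obtain ⟨S, hcard, hS⟩ := hF.exists_finset_card_eq_coverNum_inter (div_pos hρ hb) hrR hy₀
  calc
    coverNum Fhat (3 * ρ) = coverNum Fhat (2 * ρ + b * (ρ / b)) := by
      rw [mul_div_cancel₀ ρ hb.ne']
      ring_nf
    _ ≤ S.card := coverNum_le_card_of_approx hb.le hupper S fun x hx ↦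
      (hlocal x hx).imp fun y hy ↦ ⟨hS hy.1, hy.2⟩
    _ = coverNum (F ∩ closedBall y₀ R) (ρ / b) := hcard
    _ ≤ coverNumLoc F (ρ / b) R := hF.coverNum_le_coverNumLoc (div_pos hρ hb) hrR hy₀

-- After cancelling `t ^ (-(1 + δ))`, the first inequality reads `C * t ^ (-(ε - δ)) ≤ D ^ (1 + δ)`.
lemma eventually_scales_admissible {D δ ε β : ℝ} (C : ℝ) (hD : 0 < D) (hδ : 0 ≤ δ) (hδε : δ < ε)
    (hβ : 0 < β) : ∀ᶠ t : ℝ in atTop, C * t ^ (-ε) / t ≤ (D / t) ^ (1 + δ) ∧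
      (D / t) ^ (1 + δ) ≤ D / t ∧ D / t ≤ β := by
  have hdecay : Tendsto (fun t : ℝ ↦ C * t ^ (-(ε - δ))) atTop (𝓝 0) := by
    simpa using (tendsto_rpow_neg_atTop (sub_pos.2 hδε)).const_mul C
  have hscale : Tendsto (fun t : ℝ ↦ D / t) atTop (𝓝 0) := tendsto_const_nhds.div_atTop tendsto_id
  filter_upwards [eventually_gt_atTop 0, hscale.eventually_le_const (lt_min one_pos hβ),
    hdecay.eventually_le_const (Real.rpow_pos_of_pos hD (1 + δ))] with t ht hDt hCt
  refine ⟨?_, ?_, hDt.trans (min_le_right _ _)⟩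
  · calc
      C * t ^ (-ε) / t = C * t ^ (-(ε - δ)) * t ^ (-(1 + δ)) := by
        rw [mul_assoc, ← Real.rpow_add ht, mul_div_assoc, ← Real.rpow_sub_one ht.ne']
        ring_nf
      _ ≤ D ^ (1 + δ) * t ^ (-(1 + δ)) := by gcongr
      _ = (D / t) ^ (1 + δ) := by
        rw [Real.div_rpow hD.le ht.le, Real.rpow_neg ht.le, div_eq_mul_inv]
  · exact Real.rpow_le_self_of_le_one (div_pos hD ht).le (hDt.trans (min_le_left _ _)) (by linarith)

/-- The maps `T k`, with bi-Lipschitz constants `a k` and `b k`, exhibit `Fhat` as a fast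
pseudo-tangent of `F`. The two sets may live in different spaces. -/
structure IsFastPseudoTangent (F : Set X) (Fhat : Set Y) (T : ℕ → X → Y) (a b : ℕ → ℝ)
    (C ε : ℝ) : Prop where
  lower_pos : ∀ k, 0 < a k
  le_dist : ∀ k x y, a k * dist x y ≤ dist (T k x) (T k y)
  dist_le : ∀ k x y, dist (T k x) (T k y) ≤ b k * dist x y
  ratio_bounded : ∃ M : ℝ, ∀ k, b k / a k ≤ M
  upper_unbounded : ∀ M : ℝ, ∃ k, M ≤ b k
  const_pos : 0 < C
  exponent_pos : 0 < ε
  pH_le : ∀ k, pH Fhat (T k '' F) ≤ C * b k ^ (-ε)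

namespace IsFastPseudoTangent

variable {T : ℕ → X → Y} {a b : ℕ → ℝ} {C ε : ℝ}

lemma exists_pos_ratio_bound (h : IsFastPseudoTangent F Fhat T a b C ε) :
    ∃ M : ℝ, 0 < M ∧ ∀ k, b k ≤ M * a k := by
  obtain ⟨M, hM⟩ := h.ratio_bounded
  obtain ⟨k, hk⟩ := h.upper_unbounded 1
  exact ⟨M, (div_pos (one_pos.trans_le hk) (h.lower_pos k)).trans_le (hM k),
    fun k ↦ (div_le_iff₀ (h.lower_pos k)).1 (hM k)⟩

lemma tendsto_scale (h : IsFastPseudoTangent F Fhat T a b C ε) :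
    Tendsto (fun t : ℝ ↦ 3 * (C * t ^ (-ε))) atTop (𝓝[>] 0) := by
  refine tendsto_nhdsWithin_iff.2 ⟨?_, ?_⟩
  · simpa using ((tendsto_rpow_neg_atTop h.exponent_pos).const_mul C).const_mul 3
  · have hC : 0 < C := h.const_pos
    filter_upwards [eventually_gt_atTop 0] with t ht
    exact mem_Ioi.2 (by positivity)

lemma exists_coverNum_le_coverNumLoc (h : IsFastPseudoTangent F Fhat T a b C ε)
    (hF : HasFiniteAssouadDim F) (hFne : F.Nonempty) (hFhat : IsBounded Fhat)
    (hFhatne : Fhat.Nonempty) : ∃ D : ℝ, 0 < D ∧ ∀ k, 1 ≤ b k →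
      coverNum Fhat (3 * (C * b k ^ (-ε))) ≤ coverNumLoc F (C * b k ^ (-ε) / b k) (D / b k) := by
  obtain ⟨M, hM, hratio⟩ := h.exists_pos_ratio_bound
  have hC : 0 < C := h.const_pos
  refine ⟨M * (diam Fhat + 4 * C) + C, by positivity, fun k hk ↦ ?_⟩
  have hb : 0 < b k := one_pos.trans_le hk
  have ha : 0 < a k := h.lower_pos k
  have hρC : C * b k ^ (-ε) ≤ C := mul_le_of_le_one_right hC.le
    (Real.rpow_le_one_of_one_le_of_nonpos hk (neg_nonpos.2 h.exponent_pos.le))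
  refine coverNum_le_coverNumLoc_of_pH_le hF hFne hFhat hFhatne ha hb (by positivity)
    (h.le_dist k) (h.dist_le k) (h.pH_le k) ?_ ?_
  · rw [← mul_div_assoc, le_div_iff₀ hb]
    calc
      (diam Fhat + 4 * (C * b k ^ (-ε))) * b k ≤ (diam Fhat + 4 * C) * (M * a k) := by
        gcongr
        exact hratio k
      _ ≤ (diam Fhat + 4 * C) * (M * a k) + a k * C := le_add_of_nonneg_right (by positivity)
      _ = a k * (M * (diam Fhat + 4 * C) + C) := by ring
  · gcongr
    exact hρC.trans (le_add_of_nonneg_left (by positivity))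

lemma lowerBoxDim_le_of_isCoveringExponent (h : IsFastPseudoTangent F Fhat T a b C ε)
    (hF : HasFiniteAssouadDim F) (hFne : F.Nonempty) (hFhat : IsBounded Fhat)
    (hFhatne : Fhat.Nonempty) {δ α : ℝ} (hδ : 0 ≤ δ) (hδε : δ < ε)
    (hα : IsCoveringExponent F δ α) : lowerBoxDim Fhat ≤ α := by
  obtain ⟨hα₀, β, c, hβ, hc, hcover⟩ := hα
  obtain ⟨D, hD, htransfer⟩ := h.exists_coverNum_le_coverNumLoc hF hFne hFhat hFhatne
  have hC : 0 < C := h.const_pos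
  have hb : ∃ᶠ t in atTop, ∃ k, t = b k := frequently_atTop.2 fun M ↦
    (h.upper_unbounded M).elim fun k hk ↦ ⟨b k, hk, k, rfl⟩
  refine lowerBoxDim_le_of_frequently_coverNum_le (K := c * (3 * D) ^ α) hα₀ (by positivity) <|
    h.tendsto_scale.frequently <| (hb.and_eventually <| (eventually_ge_atTop 1).and <|
      eventually_scales_admissible C hD hδ hδε hβ).mono ?_
  rintro _ ⟨⟨k, rfl⟩, hk, hrR, hR₁, hRβ⟩
  have hbk : 0 < b k := one_pos.trans_le hk
  calc
    (coverNum Fhat (3 * (C * b k ^ (-ε))) : ℝ)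
      ≤ coverNumLoc F (C * b k ^ (-ε) / b k) (D / b k) := Nat.cast_le.2 (htransfer k hk)
    _ ≤ c * (D / b k / (C * b k ^ (-ε) / b k)) ^ α := hcover _ _ (by positivity) hrR hR₁ hRβ
    _ = c * (3 * D * (1 / (3 * (C * b k ^ (-ε))))) ^ α := by
      rw [div_div_div_cancel_right₀ hbk.ne', mul_one_div, mul_div_mul_left _ _ three_ne_zero]
    _ = c * (3 * D) ^ α * (1 / (3 * (C * b k ^ (-ε)))) ^ α := by
      rw [Real.mul_rpow (by positivity) (by positivity), mul_assoc]

end IsFastPseudoTangent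

end PseudoTangent

theorem lowerBoxDim_fastPseudoTangent_le_qADim_general {X Y : Type*} [PseudoMetricSpace X]
    [PseudoMetricSpace Y] {F : Set X} {Fhat : Set Y} {T : ℕ → X → Y} {a b : ℕ → ℝ} {C ε : ℝ}
    (h : IsFastPseudoTangent F Fhat T a b C ε) (hF : HasFiniteAssouadDim F) (hFne : F.Nonempty)
    (hFhat : IsBounded Fhat) (hFhatne : Fhat.Nonempty) : lowerBoxDim Fhat ≤ qADim F := by
  obtain ⟨δ, hδ, hδmin⟩ := exists_between (lt_min h.exponent_pos one_pos)
  obtain ⟨hδε, hδ₁⟩ := lt_min_iff.1 hδmin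
  calc
    lowerBoxDim Fhat ≤ hUpper F δ := le_hUpper hF fun α hα ↦
      h.lowerBoxDim_le_of_isCoveringExponent hF hFne hFhat hFhatne hδ.le hδε hα
    _ ≤ qADim F := hUpper_le_qADim hF ⟨hδ, hδ₁⟩

/-- If `Fhat` is a fast pseudo-tangent of `F`, then
`\underline{dim}_B Fhat ≤ dim_qA F`. -/
theorem lowerBoxDim_fastPseudoTangent_le_qADim
    {d : ℕ} (F Fhat : Set (EuclideanSpace ℝ (Fin d)))
    (hFc : IsCompact F) (hFne : F.Nonempty)
    (hFhatc : IsCompact Fhat) (hFhatne : Fhat.Nonempty)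
    (T : ℕ → EuclideanSpace ℝ (Fin d) → EuclideanSpace ℝ (Fin d)) (a b : ℕ → ℝ) (C ε : ℝ)
    (ha : ∀ k, 0 < a k) (hab : ∀ k, a k ≤ b k)
    (hbiLip : ∀ k x y, a k * ‖x - y‖ ≤ ‖T k x - T k y‖ ∧ ‖T k x - T k y‖ ≤ b k * ‖x - y‖)
    (hratio : ∃ M : ℝ, ∀ k, b k / a k ≤ M)
    (hbtop : ∀ M : ℝ, ∃ k, M ≤ b k)
    (hC : 0 < C) (hε : 0 < ε)
    (hfast : ∀ k, pH Fhat (T k '' F) ≤ C * b k ^ (-ε)) :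
    lowerBoxDim Fhat ≤ qADim F := by
  simp only [← dist_eq_norm] at hbiLip
  exact lowerBoxDim_fastPseudoTangent_le_qADim_general
    ⟨ha, fun k x y ↦ (hbiLip k x y).1, fun k x y ↦ (hbiLip k x y).2, hratio, hbtop, hC, hε, hfast⟩
    (hasFiniteAssouadDim_of_finiteDimensional F) hFne hFhatc.isBounded hFhatne
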